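/- Let d ≥ 1 and let (M_n)_{n≥1} be a sequence of (d+1)×(d+1) complex matrices of block form M_n = [[A_n, R_n],[0ᵀ, a_n]] with A_n ∈ ℂ^{d×d}, R_n ∈ ℂ^d, a_n ∈ ℂ. Define g(x) := limsup_{n→∞} (1/n) log‖A_n⋯A_1 x‖ for x ∈ ℂ^d and f(Y) := limsup_{n→∞} (1/n) log‖M_n⋯M_1 Y‖ for Y ∈ ℂ^{d+1}, with values in ℝ ∪ {−∞}. Assume: (i) there exist reals μ_1 > μ_2 > ⋯ > μ_d and linear subspaces {0} = U_{d+1} ⊂ U_d ⊂ ⋯ ⊂ U_1 = ℂ^d with dim U_i = d+1−i such that for x ∈ ℂ^d, g(x) = μ_i if and only if x ∈ U_i \ U_{i+1}; (ii) there exists λ_a ∈ ℝ with λ_a ∉ {μ_1,…,μ_d} such that, writing ν_1 > ν_2 > ⋯ > ν_{d+1} for the decreasing enumeration of {μ_1,…,μ_d} ∪ {λ_a}, there exist linear subspaces {0} = V_{d+2} ⊂ V_{d+1} ⊂ ⋯ ⊂ V_1 = ℂ^{d+1} with dim V_i = d+2−i such that for Y ∈ ℂ^{d+1}, f(Y) =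 ν_i if and only if Y ∈ V_i \ V_{i+1}. Then for every i ∈ {1,…,d} there exists X_0 ∈ ℂ^d such that f([X_0ᵀ, 1]ᵀ) = max{μ_i, λ_a}. -/

import Mathlib

open Filter

/-- The Euclidean norm of a vector in `ℂ^m`. -/
noncomputable def enorm {m : Type*} [Fintype m] (x : m → ℂ) : ℝ :=
  Real.sqrt (∑ i, ‖x i‖ ^ 2)

/-- The natural logarithm with values in `ℝ ∪ {−∞, ∞}`, sending `0` to `−∞`. -/
noncomputable def elog (r : ℝ) : EReal :=
  if r = 0 then ⊥ else ((Real.log r : ℝ) : EReal)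

/-- The product `A n ⋯ A 1` (empty product for `n = 0`). -/
noncomputable def prodSeq {d : ℕ} (A : ℕ → Matrix (Fin d) (Fin d) ℂ) :
    ℕ → Matrix (Fin d) (Fin d) ℂ
  | 0 => 1
  | n + 1 => A (n + 1) * prodSeq A n

/-- The Lyapunov exponent function of the matrix products `A n ⋯ A 1`:
`x ↦ limsup (1/n) log ‖A n ⋯ A 1 x‖`, with values in `ℝ ∪ {−∞, ∞}`. -/
noncomputable def lyap {d : ℕ} (A : ℕ → Matrix (Fin d) (Fin d) ℂ) (x : Fin d → ℂ) : EReal :=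
  Filter.limsup (fun n : ℕ => elog (enorm ((prodSeq A n).mulVec x)) / ((n : ℝ) : EReal)) atTop

/-- The `(d+1) × (d+1)` block matrix `[[A, R], [0ᵀ, a]]`. -/
noncomputable def blockM {d : ℕ} (A : Matrix (Fin d) (Fin d) ℂ) (R : Fin d → ℂ) (a : ℂ) :
    Matrix (Fin (d + 1)) (Fin (d + 1)) ℂ :=
  Matrix.of fun p q =>
    Fin.lastCases (Fin.lastCases a (fun _ => (0 : ℂ)) q)
      (fun i => Fin.lastCases (R i) (fun j => A i j) q) p

theorem blockM_mulVec_snoc {d : ℕ} (A : Matrix (Fin d) (Fin d) ℂ) (R : Fin d → ℂ) (a : ℂ)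
    (x : Fin d → ℂ) :
    (blockM A R a).mulVec (Fin.snoc x (0 : ℂ) : Fin (d + 1) → ℂ) =
      (Fin.snoc (A.mulVec x) (0 : ℂ) : Fin (d + 1) → ℂ) := by
  funext p
  refine Fin.lastCases ?_ (fun i => ?_) p
  · simp [Matrix.mulVec, dotProduct, blockM, Fin.sum_univ_castSucc]
  · simp [Matrix.mulVec, dotProduct, blockM, Fin.sum_univ_castSucc]

theorem prodSeq_mulVec_snoc {d : ℕ} (A : ℕ → Matrix (Fin d) (Fin d) ℂ) (R : ℕ → Fin d → ℂ)
    (a : ℕ → ℂ) (x : Fin d → ℂ) (n : ℕ) :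
    (prodSeq (fun n => blockM (A n) (R n) (a n)) n).mulVec
        (Fin.snoc x (0 : ℂ) : Fin (d + 1) → ℂ) =
      (Fin.snoc ((prodSeq A n).mulVec x) (0 : ℂ) : Fin (d + 1) → ℂ) := by
  induction n with
  | zero => simp [prodSeq]
  | succ n ih =>
    simp only [prodSeq]
    rw [← Matrix.mulVec_mulVec, ih, blockM_mulVec_snoc, Matrix.mulVec_mulVec]

theorem lyap_snoc_zero {d : ℕ} (A : ℕ → Matrix (Fin d) (Fin d) ℂ) (R : ℕ → Fin d → ℂ)
    (a : ℕ → ℂ) (x : Fin d → ℂ) :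
    lyap (fun n => blockM (A n) (R n) (a n)) (Fin.snoc x (0 : ℂ) : Fin (d + 1) → ℂ) =
      lyap A x := by
  unfold lyap
  congr 1
  funext n
  rw [prodSeq_mulVec_snoc]
  congr 2
  simp [_root_.enorm, Fin.sum_univ_castSucc]

/-- In a descending flag ending at `⊥`, each nonzero vector lies in some successive difference. -/
theorem flag_level {E : Type*} [AddCommGroup E] [Module ℂ E] (U : ℕ → Submodule ℂ E) (x : E)
    (h1 : x ∈ U 1) : ∀ m : ℕ, x ∉ U (m + 1) → ∃ i, 1 ≤ i ∧ i ≤ m ∧ x ∈ U i ∧ x ∉ U (i + 1) := by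
  intro m
  induction m with
  | zero => intro h; exact absurd h1 h
  | succ m ih =>
    intro h
    by_cases hm : x ∈ U (m + 1)
    · exact ⟨m + 1, by omega, le_rfl, hm, h⟩
    · obtain ⟨i, a, b, c⟩ := ih hm
      exact ⟨i, a, by omega, c⟩

/-- deterministic core of the paper's Theorem 1. Let `M n` be block matrices
`[[A n, R n], [0ᵀ, a n]]`, and let `g = lyap A` and `f = lyap M` be the Lyapunov exponent
functions of the products `A n ⋯ A 1` and `M n ⋯ M 1`. Assume the Oseledets filtration
structure: (i) `g` takes `d` distinct real values `μ 1 > ⋯ > μ d` on the successive differences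
of a full flag `{0} = U (d+1) ⊂ ⋯ ⊂ U 1 = ℂ^d` with `dim (U i) = d + 1 − i`; (ii) there is
`λ_a ∈ ℝ`, distinct from the `μ i`, such that `f` takes the `d + 1` distinct values
`ν 1 > ⋯ > ν (d+1)` enumerating `{μ 1, …, μ d} ∪ {λ_a}` on the successive differences of a full
flag `{0} = V (d+2) ⊂ ⋯ ⊂ V 1 = ℂ^{d+1}` with `dim (V i) = d + 2 − i`. Then for every
`i ∈ {1, …, d}` there exists `X₀ ∈ ℂ^d` with `f ([X₀ᵀ, 1]ᵀ) = max {μ i, λ_a}`. -/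
theorem augmented_initial_state_attains_lyapunov
    (d : ℕ) (hd : 1 ≤ d)
    (A : ℕ → Matrix (Fin d) (Fin d) ℂ) (R : ℕ → Fin d → ℂ) (a : ℕ → ℂ)
    (μ : ℕ → ℝ) (hμ : ∀ i j, 1 ≤ i → i < j → j ≤ d → μ j < μ i)
    (U : ℕ → Submodule ℂ (Fin d → ℂ))
    (hUbot : U (d + 1) = ⊥) (hUtop : U 1 = ⊤)
    (hUchain : ∀ i, 1 ≤ i → i ≤ d → U (i + 1) < U i)
    (hUdim : ∀ i, 1 ≤ i → i ≤ d + 1 → Module.finrank ℂ (U i) = d + 1 - i)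
    (hUiff : ∀ (x : Fin d → ℂ) (i : ℕ), 1 ≤ i → i ≤ d →
      (lyap A x = ((μ i : ℝ) : EReal) ↔ x ∈ U i ∧ x ∉ U (i + 1)))
    (lamA : ℝ) (hlamA : ∀ i, 1 ≤ i → i ≤ d → lamA ≠ μ i)
    (ν : ℕ → ℝ) (hν : ∀ i j, 1 ≤ i → i < j → j ≤ d + 1 → ν j < ν i)
    (hνset : ∀ r : ℝ,
      (∃ i, 1 ≤ i ∧ i ≤ d + 1 ∧ ν i = r) ↔ ((∃ i, 1 ≤ i ∧ i ≤ d ∧ μ i = r) ∨ r = lamA))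
    (V : ℕ → Submodule ℂ (Fin (d + 1) → ℂ))
    (hVbot : V (d + 2) = ⊥) (hVtop : V 1 = ⊤)
    (hVchain : ∀ i, 1 ≤ i → i ≤ d + 1 → V (i + 1) < V i)
    (hVdim : ∀ i, 1 ≤ i → i ≤ d + 2 → Module.finrank ℂ (V i) = d + 2 - i)
    (hViff : ∀ (Y : Fin (d + 1) → ℂ) (i : ℕ), 1 ≤ i → i ≤ d + 1 →
      (lyap (fun n => blockM (A n) (R n) (a n)) Y = ((ν i : ℝ) : EReal) ↔
        Y ∈ V i ∧ Y ∉ V (i + 1))) :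
    ∀ i : ℕ, 1 ≤ i → i ≤ d → ∃ X0 : Fin d → ℂ,
      lyap (fun n => blockM (A n) (R n) (a n)) (Fin.snoc X0 (1 : ℂ)) =
        ((max (μ i) lamA : ℝ) : EReal) := by
  intro i hi1 hid
  obtain ⟨k, hk1, hkd, hk⟩ := (hνset lamA).2 (Or.inr rfl)
  obtain ⟨Y, hYk, hYk'⟩ := SetLike.exists_of_lt (hVchain k hk1 hkd)
  -- the last coordinate of `Y` is nonzero
  have hYlast : Y (Fin.last d) ≠ 0 := by
    intro h0
    have hY : Y = (Fin.snoc (fun j : Fin d => Y j.castSucc) (0 : ℂ) : Fin (d + 1) → ℂ) := by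
      funext p
      refine Fin.lastCases ?_ (fun j => ?_) p
      · simp [h0]
      · simp
    have hf := (hViff Y k hk1 hkd).2 ⟨hYk, hYk'⟩
    rw [hY, lyap_snoc_zero, hk] at hf
    have hx0 : (fun j : Fin d => Y j.castSucc) ≠ 0 := by
      intro hx
      apply hYk'
      have : Y = 0 := by
        rw [hY, hx]
        funext p
        refine Fin.lastCases ?_ (fun j => ?_) p <;> simp
      rw [this]
      exact Submodule.zero_mem _
    obtain ⟨l, hl1, hld, hl⟩ := flag_level U (fun j : Fin d => Y j.castSucc)
      (by rw [hUtop]; trivial) d (by rw [hUbot]; simpa using hx0)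
    have hg := (hUiff _ l hl1 hld).2 hl
    rw [hf] at hg
    exact hlamA l hl1 hld (EReal.coe_eq_coe_iff.1 hg)
  -- rescaling within the flag
  have key : ∀ (Z : Fin (d + 1) → ℂ) (j : ℕ), 1 ≤ j → j ≤ d + 1 → Z ∈ V j → Z ∉ V (j + 1) →
      Z (Fin.last d) ≠ 0 → ∃ X0 : Fin d → ℂ,
      lyap (fun n => blockM (A n) (R n) (a n)) (Fin.snoc X0 (1 : ℂ)) = ((ν j : ℝ) : EReal) := by
    intro Z j hj1 hjd hZ hZ' hZl
    refine ⟨fun l => (Z (Fin.last d))⁻¹ * Z l.castSucc, ?_⟩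
    have hs : (Fin.snoc (fun l : Fin d => (Z (Fin.last d))⁻¹ * Z l.castSucc) (1 : ℂ) :
        Fin (d + 1) → ℂ) = (Z (Fin.last d))⁻¹ • Z := by
      funext p
      refine Fin.lastCases ?_ (fun j => ?_) p
      · simp [hZl]
      · simp
    rw [hs, hViff _ j hj1 hjd, Submodule.smul_mem_iff _ (inv_ne_zero hZl),
      Submodule.smul_mem_iff _ (inv_ne_zero hZl)]
    exact ⟨hZ, hZ'⟩
  rcases le_total (μ i) lamA with hle | hle
  · rw [max_eq_right hle, ← hk]
    exact key Y k hk1 hkd hYk hYk' hYlast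
  · rw [max_eq_left hle]
    have hlt : lamA < μ i := lt_of_le_of_ne hle (hlamA i hi1 hid)
    obtain ⟨j, hj1, hjd, hj⟩ := (hνset (μ i)).2 (Or.inl ⟨i, hi1, hid, rfl⟩)
    have hjk : j < k := by
      by_contra hcon
      rcases Nat.lt_or_eq_of_le (not_lt.1 hcon) with h | h
      · have := hν k j hk1 h hjd
        linarith
      · rw [h] at hk
        linarith
    have hanti : ∀ m, j + 1 ≤ m → m ≤ d + 1 → V m ≤ V (j + 1) := by
      intro m hm
      induction m, hm using Nat.le_induction with
      | base => intro _; exact le_rfl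
      | succ m hm ih =>
        intro hmd
        exact (hVchain m (by omega) (by omega)).le.trans (ih (by omega))
    have hYj : Y ∈ V (j + 1) := hanti k hjk hkd hYk
    obtain ⟨x, hx⟩ := SetLike.exists_of_lt (hUchain i hi1 hid)
    have hg := (hUiff x i hi1 hid).2 hx
    rw [← lyap_snoc_zero A R a x, ← hj, hViff _ j hj1 hjd] at hg
    rw [← hj]
    refine key (Fin.snoc x (0 : ℂ) + Y) j hj1 hjd ?_ ?_ ?_
    · exact Submodule.add_mem _ hg.1 ((hVchain j hj1 hjd).le hYj)
    · intro h
      exact hg.2 ((Submodule.add_mem_iff_left _ hYj).1 h)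
    · simpa using hYlast
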